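/- Let n ≥ 2, let 1 ≤ p_i ≤ ∞ (i = 1,…,n) with p_n ≥ 2, and let 1 ≤ p ≤ ∞ satisfy n − 3/2 ≤ 1/p_1 + ⋯ + 1/p_n − 1/p (with the convention 1/∞ = 0). If E_1, …, E_n are Banach spaces such that E_n' has the Littlewood–Orlicz property, then every continuous n-linear form A : E_1 × ⋯ × E_n → 𝕂 is absolutely (p;p_1,…,p_n)-summing. -/

import Mathlib

open scoped BigOperators NNReal ENNReal

/-- The weak `ℓ_r` norm of a finite family `(x_j)` in a normed space:
`sup_{‖φ‖ ≤ 1} (∑_j ‖φ(x_j)‖^r)^(1/r)`. -/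
noncomputable def weakNorm (𝕜 : Type*) [RCLike 𝕜] {E : Type*} [NormedAddCommGroup E]
    [NormedSpace 𝕜 E] (r : ℝ) {m : ℕ} (x : Fin m → E) : ℝ :=
  ⨆ φ : {φ : E →L[𝕜] 𝕜 // ‖φ‖ ≤ 1}, (∑ j, ‖φ.1 (x j)‖ ^ r) ^ (1 / r)

/-- A Banach space `X` has the Littlewood–Orlicz property: `ℓ₁ʷ(X)` embeds continuously into
`ℓ₂ ⊗_π X = ℓ₂⟨X⟩`, expressed through the Bu–Diestel duality characterization:
`∑_j |ψ_j(x_j)| ≤ C ‖(x_j)‖_{ℓ₁ʷ(X)} ‖(ψ_j)‖_{ℓ₂ʷ(X')}` for all finite families. -/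
def LittlewoodOrlicz (𝕜 : Type*) [RCLike 𝕜] (X : Type*) [NormedAddCommGroup X]
    [NormedSpace 𝕜 X] : Prop :=
  ∃ C > 0, ∀ (m : ℕ) (x : Fin m → X) (ψ : Fin m → (X →L[𝕜] 𝕜)),
    ∑ j, ‖ψ j (x j)‖ ≤ C * weakNorm 𝕜 1 x * weakNorm 𝕜 2 ψ

/-- The `ℓ_p` norm of a finite family, for an extended-real exponent `p ∈ (0, ∞]`
(with the sup-norm interpretation when `p = ∞`). -/
noncomputable def lpNormE {F : Type*} [NormedAddCommGroup F] (p : ℝ≥0∞) {m : ℕ}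
    (y : Fin m → F) : ℝ :=
  if p = ∞ then ⨆ j, ‖y j‖ else (∑ j, ‖y j‖ ^ p.toReal) ^ (1 / p.toReal)

/-- The weak `ℓ_r` norm of a finite family, for an extended-real exponent `r ∈ (0, ∞]`
(with the interpretation `max_j ‖x_j‖` when `r = ∞`). -/
noncomputable def weakNormE (𝕜 : Type*) [RCLike 𝕜] {E : Type*} [NormedAddCommGroup E]
    [NormedSpace 𝕜 E] (r : ℝ≥0∞) {m : ℕ} (x : Fin m → E) : ℝ :=
  if r = ∞ then ⨆ j, ‖x j‖
  else ⨆ φ : {φ : E →L[𝕜] 𝕜 // ‖φ‖ ≤ 1}, (∑ j, ‖φ.1 (x j)‖ ^ r.toReal) ^ (1 / r.toReal)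

/-- A continuous multilinear map is absolutely `(p; p₁, …, pₙ)`-summing, for
extended-real exponents. -/
def IsAbsSummingE {𝕜 : Type*} [RCLike 𝕜] {n : ℕ} {E : Fin n → Type*}
    [∀ i, NormedAddCommGroup (E i)] [∀ i, NormedSpace 𝕜 (E i)]
    {F : Type*} [NormedAddCommGroup F] [NormedSpace 𝕜 F]
    (p : ℝ≥0∞) (ps : Fin n → ℝ≥0∞) (A : ContinuousMultilinearMap 𝕜 E F) : Prop :=
  ∃ C > 0, ∀ (m : ℕ) (x : ∀ i, Fin m → E i),
    lpNormE p (fun j => A (fun i => x i j)) ≤ C * ∏ i, weakNormE 𝕜 (ps i) (x i)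

section aux

variable {𝕜 : Type*} [RCLike 𝕜] {E : Type*} [NormedAddCommGroup E] [NormedSpace 𝕜 E]

lemma wk_bdd {r : ℝ} (hr : 0 < r) {m : ℕ} (x : Fin m → E) :
    BddAbove (Set.range fun φ : {φ : E →L[𝕜] 𝕜 // ‖φ‖ ≤ 1} =>
      (∑ j, ‖φ.1 (x j)‖ ^ r) ^ (1 / r)) := by
  refine ⟨(∑ j, ‖x j‖ ^ r) ^ (1 / r), ?_⟩
  rintro _ ⟨φ, rfl⟩
  have h : ∀ j, ‖φ.1 (x j)‖ ≤ ‖x j‖ := fun j => by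
    simpa using φ.1.le_of_opNorm_le φ.2 (x j)
  have : (0:ℝ) ≤ 1 / r := by positivity
  dsimp only
  gcongr with j
  exact h j

lemma wk_le {r : ℝ} (hr : 0 < r) {m : ℕ} (x : Fin m → E) (φ : E →L[𝕜] 𝕜) (h : ‖φ‖ ≤ 1) :
    (∑ j, ‖φ (x j)‖ ^ r) ^ (1 / r) ≤ weakNorm 𝕜 r x :=
  le_ciSup (wk_bdd hr x) ⟨φ, h⟩

lemma wk_nonneg (r : ℝ) {m : ℕ} (x : Fin m → E) : 0 ≤ weakNorm 𝕜 r x :=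
  Real.iSup_nonneg fun φ => by positivity

lemma wk_sup_le {r : ℝ} {m : ℕ} (x : Fin m → E) (B : ℝ)
    (h : ∀ φ : E →L[𝕜] 𝕜, ‖φ‖ ≤ 1 → (∑ j, ‖φ (x j)‖ ^ r) ^ (1 / r) ≤ B) :
    weakNorm 𝕜 r x ≤ B := by
  have : Nonempty {φ : E →L[𝕜] 𝕜 // ‖φ‖ ≤ 1} := ⟨⟨0, by simp⟩⟩
  exact ciSup_le fun φ => h φ.1 φ.2

lemma wk_one_le {m : ℕ} (x : Fin m → E) (φ : E →L[𝕜] 𝕜) (h : ‖φ‖ ≤ 1) :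
    ∑ j, ‖φ (x j)‖ ≤ weakNorm 𝕜 1 x := by
  simpa using wk_le one_pos x φ h

lemma wk_one_le' {m : ℕ} (x : Fin m → E) (φ : E →L[𝕜] 𝕜) :
    ∑ j, ‖φ (x j)‖ ≤ ‖φ‖ * weakNorm 𝕜 1 x := by
  by_cases h0 : φ = 0
  · simp [h0]
  have hp : 0 < ‖φ‖ := norm_pos_iff.2 h0
  have h := wk_one_le x (((‖φ‖⁻¹ : ℝ) : 𝕜) • φ) (by
    rw [norm_smul]; simp [hp.ne'])
  simp only [smul_apply, norm_smul, ← Finset.mul_sum] at h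
  rw [RCLike.norm_ofReal, abs_of_pos (inv_pos.2 hp), inv_mul_le_iff₀ hp] at h
  exact h

lemma sign_sum_le {m : ℕ} (x : Fin m → E) (ε : Fin m → ℤˣ) :
    ‖∑ i, (((ε i : ℤ)) : 𝕜) • x i‖ ≤ weakNorm 𝕜 1 x := by
  obtain ⟨g, hg, hgx⟩ := exists_dual_vector'' 𝕜 (∑ i, (((ε i : ℤ)) : 𝕜) • x i)
  have h1 : ‖∑ i, (((ε i : ℤ)) : 𝕜) • x i‖ = ‖g (∑ i, (((ε i : ℤ)) : 𝕜) • x i)‖ := by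
    rw [hgx]; simp
  rw [h1, map_sum]
  refine (norm_sum_le _ _).trans ?_
  refine le_trans (le_of_eq ?_) (wk_one_le x g hg)
  refine Finset.sum_congr rfl fun i _ => ?_
  rw [map_smul, norm_smul]
  rcases Int.units_eq_one_or (ε i) with h | h <;> simp [h]

lemma sign_orth {m : ℕ} {i j : Fin m} (h : i ≠ j) :
    ∑ ε : Fin m → ℤˣ, ((ε j : ℤ) : 𝕜) * ((ε i : ℤ) : 𝕜) = 0 := by
  refine Finset.sum_involution (fun ε _ => Function.update ε i (- ε i)) ?_ ?_ ?_ ?_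
  · intro ε _
    simp [Function.update_of_ne h.symm]
  · intro ε _ _ h2
    have := congrFun h2 i
    rcases Int.units_eq_one_or (ε i) with h | h <;> simp [h] at this
  · simp
  · intro ε _
    simp

lemma sign_avg {m : ℕ} (x : Fin m → E) (j : Fin m) :
    ∑ ε : Fin m → ℤˣ, ((ε j : ℤ) : 𝕜) • ∑ i, ((ε i : ℤ) : 𝕜) • x i
      = (Fintype.card (Fin m → ℤˣ) : 𝕜) • x j := by
  simp_rw [Finset.smul_sum, smul_smul]
  rw [Finset.sum_comm]
  simp_rw [← Finset.sum_smul]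
  rw [Finset.sum_eq_single j]
  · congr 1
    have : ∀ ε : Fin m → ℤˣ, ((ε j : ℤ) : 𝕜) * ((ε j : ℤ) : 𝕜) = 1 := fun ε => by
      rcases Int.units_eq_one_or (ε j) with h | h <;> simp [h]
    simp only [this, Finset.sum_const, Finset.card_univ, nsmul_eq_mul, mul_one]
  · intro i _ hi
    rw [sign_orth hi, zero_smul]
  · simp

lemma avg_bound {m : ℕ} (x : Fin m → E) (f : Fin m → E →L[𝕜] 𝕜) (K : ℝ) (hK : 0 ≤ K)
    (hf : ∀ e, ∑ j, ‖f j e‖ ≤ K * ‖e‖) :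
    ∑ j, ‖f j (x j)‖ ≤ K * weakNorm 𝕜 1 x := by
  set N : ℝ := (Fintype.card (Fin m → ℤˣ) : ℝ) with hN
  have hNpos : 0 < N := by
    rw [hN]; exact_mod_cast Fintype.card_pos
  have key : ∀ j, N * ‖f j (x j)‖ ≤
      ∑ ε : Fin m → ℤˣ, ‖f j (∑ i, ((ε i : ℤ) : 𝕜) • x i)‖ := fun j => by
    have h := congrArg (f j) (sign_avg (𝕜 := 𝕜) x j)
    have h2 : N * ‖f j (x j)‖ = ‖f j ((Fintype.card (Fin m → ℤˣ) : 𝕜) • x j)‖ := by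
      rw [map_smul, norm_smul, RCLike.norm_natCast]
    rw [h2, ← h, map_sum]
    refine (norm_sum_le _ _).trans (le_of_eq (Finset.sum_congr rfl fun ε _ => ?_))
    rw [map_smul, norm_smul]
    rcases Int.units_eq_one_or (ε j) with h | h <;> simp [h]
  have h3 : N * ∑ j, ‖f j (x j)‖ ≤ N * (K * weakNorm 𝕜 1 x) := by
    rw [Finset.mul_sum]
    refine (Finset.sum_le_sum fun j _ => key j).trans ?_
    rw [Finset.sum_comm]
    have : ∀ ε ∈ (Finset.univ : Finset (Fin m → ℤˣ)),
        ∑ j, ‖f j (∑ i, ((ε i : ℤ) : 𝕜) • x i)‖ ≤ K * weakNorm 𝕜 1 x := fun ε _ =>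
      (hf _).trans (mul_le_mul_of_nonneg_left (sign_sum_le x ε) hK)
    refine (Finset.sum_le_sum this).trans ?_
    simp [hN]
  exact le_of_mul_le_mul_left h3 hNpos

/-- Hölder with weights. -/
lemma holder_w {m : ℕ} (w d : Fin m → ℝ) (hw : ∀ j, 0 ≤ w j) (hw1 : ∑ j, w j ≤ 1)
    (hd : ∀ j, 0 ≤ d j) (θ : ℝ) (h0 : 0 < θ) (h1 : θ ≤ 1) :
    ∑ j, w j ^ (1 - θ) * d j ^ θ ≤ (∑ j, d j) ^ θ := by
  set D := ∑ j, d j with hD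
  have hDn : 0 ≤ D := Finset.sum_nonneg fun j _ => hd j
  rcases hDn.eq_or_lt with h | h
  · have : ∀ j, d j = 0 := fun j =>
      (Finset.sum_eq_zero_iff_of_nonneg (fun j _ => hd j)).1 h.symm j (Finset.mem_univ _)
    simp [this, Real.zero_rpow h0.ne', ← h]
  · have hj : ∀ j ∈ (Finset.univ : Finset (Fin m)), w j ^ (1 - θ) * d j ^ θ ≤
        D ^ θ * ((1 - θ) * w j + θ * (d j / D)) := fun j _ => by
      have := Real.geom_mean_le_arith_mean2_weighted (sub_nonneg.2 h1) h0.le (hw j)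
        (div_nonneg (hd j) hDn) (by ring)
      rw [Real.div_rpow (hd j) hDn] at this
      have hDp : 0 < D ^ θ := Real.rpow_pos_of_pos h θ
      calc w j ^ (1 - θ) * d j ^ θ = D ^ θ * (w j ^ (1 - θ) * (d j ^ θ / D ^ θ)) := by
            field_simp
        _ ≤ _ := mul_le_mul_of_nonneg_left this hDp.le
    refine (Finset.sum_le_sum hj).trans ?_
    rw [← Finset.mul_sum, Finset.sum_add_distrib, ← Finset.mul_sum, ← Finset.mul_sum,
      ← Finset.sum_div, ← hD, div_self h.ne']
    have : (1 - θ) * ∑ j, w j + θ * 1 ≤ 1 := by nlinarith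
    exact mul_le_of_le_one_right (by positivity) this

lemma wk_compare {m : ℕ} (x : Fin m → E) (w : Fin m → ℝ) (hw : ∀ j, 0 ≤ w j)
    (hw1 : ∑ j, w j ≤ 1) (r : ℝ) (hr : 0 < r) (q : ℝ≥0∞) (hq : ENNReal.ofReal r ≤ q) :
    weakNorm 𝕜 r (fun j => ((w j ^ (1 / r - (1 / q).toReal) : ℝ) : 𝕜) • x j)
      ≤ weakNormE 𝕜 q x := by
  refine wk_sup_le _ _ fun φ hφ => ?_
  have e : ∀ (t : ℝ) j, ‖φ (((w j ^ t : ℝ) : 𝕜) • x j)‖ = w j ^ t * ‖φ (x j)‖ := fun t j => by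
    rw [map_smul, norm_smul, RCLike.norm_ofReal, abs_of_nonneg (Real.rpow_nonneg (hw j) _)]
  simp only [e]
  have e2 : ∀ (t : ℝ) j, (w j ^ t * ‖φ (x j)‖) ^ r = w j ^ (t * r) * ‖φ (x j)‖ ^ r :=
    fun t j => by
      rw [Real.mul_rpow (Real.rpow_nonneg (hw j) _) (norm_nonneg _), ← Real.rpow_mul (hw j)]
  simp only [e2]
  by_cases hqt : q = ∞
  · subst hqt
    simp only [weakNormE, if_true]
    have hs : ∀ j, ‖φ (x j)‖ ≤ ⨆ j, ‖x j‖ := fun j =>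
      (by simpa using φ.le_of_opNorm_le hφ (x j) : ‖φ (x j)‖ ≤ ‖x j‖).trans
        (le_ciSup (f := fun j => ‖x j‖) (Set.finite_range _).bddAbove j)
    have hM : 0 ≤ ⨆ j, ‖x j‖ := Real.iSup_nonneg fun j => norm_nonneg _
    set M := ⨆ j, ‖x j‖
    have h1 : (1 / r - (1 / (∞ : ℝ≥0∞)).toReal) * r = 1 := by
      simp [hr.ne']
    simp only [h1, Real.rpow_one]
    have : ∑ j, w j * ‖φ (x j)‖ ^ r ≤ M ^ r := by
      calc ∑ j, w j * ‖φ (x j)‖ ^ r ≤ ∑ j, w j * M ^ r := by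
            refine Finset.sum_le_sum fun j _ => mul_le_mul_of_nonneg_left ?_ (hw j)
            exact Real.rpow_le_rpow (norm_nonneg _) (hs j) hr.le
        _ = (∑ j, w j) * M ^ r := by rw [Finset.sum_mul]
        _ ≤ M ^ r := mul_le_of_le_one_left (by positivity) hw1
    calc _ ≤ (M ^ r) ^ (1 / r) := by
          refine Real.rpow_le_rpow ?_ this (by positivity)
          exact Finset.sum_nonneg fun j _ => mul_nonneg (hw j) (by positivity)
      _ = M := by rw [← Real.rpow_mul hM, mul_one_div_cancel hr.ne', Real.rpow_one]
  · have hrq : r ≤ q.toReal := (ENNReal.ofReal_le_iff_le_toReal hqt).1 hq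
    have hq0 : 0 < q.toReal := hr.trans_le hrq
    have hE : weakNormE 𝕜 q x = weakNorm 𝕜 q.toReal x := by
      simp [weakNormE, hqt, weakNorm]
    rw [hE]
    refine le_trans ?_ (wk_le hq0 x φ hφ)
    have hθ := holder_w w (fun j => ‖φ (x j)‖ ^ q.toReal) hw hw1 (fun j => by positivity)
      (r / q.toReal) (by positivity) ((div_le_one hq0).2 hrq)
    have h1 : (1 / r - (1 / q).toReal) * r = 1 - r / q.toReal := by
      rw [one_div q, ENNReal.toReal_inv]; field_simp
    have h2 : ∀ j, (‖φ (x j)‖ ^ q.toReal) ^ (r / q.toReal) = ‖φ (x j)‖ ^ r := fun j => by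
      rw [← Real.rpow_mul (norm_nonneg _), mul_div_cancel₀ _ hq0.ne']
    simp only [h2] at hθ
    simp only [h1]
    calc _ ≤ ((∑ j, ‖φ (x j)‖ ^ q.toReal) ^ (r / q.toReal)) ^ (1 / r) := by
          refine Real.rpow_le_rpow ?_ hθ (by positivity)
          exact Finset.sum_nonneg fun j _ =>
            mul_nonneg (Real.rpow_nonneg (hw j) _) (by positivity)
      _ = _ := by
          rw [← Real.rpow_mul (Finset.sum_nonneg fun j _ => by positivity)]
          congr 1; field_simp

end aux

section multi

variable {𝕜 : Type*} [RCLike 𝕜] {n : ℕ} {E : Fin n → Type*}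
    [∀ i, NormedAddCommGroup (E i)] [∀ i, NormedSpace 𝕜 (E i)]

/-- Defant–Voigt. -/
lemma defant_voigt (A : ContinuousMultilinearMap 𝕜 E 𝕜) {m : ℕ} (x : ∀ i, Fin m → E i)
    (S : Finset (Fin n)) (hS : S.Nonempty) : ∀ v : ∀ i, E i,
    ∑ j, ‖A (S.piecewise (fun i => x i j) v)‖ ≤
      ‖A‖ * (∏ i ∈ S, weakNorm 𝕜 1 (x i)) * ∏ i ∈ Sᶜ, ‖v i‖ := by
  induction hS using Finset.Nonempty.cons_induction with
  | singleton a =>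
    intro v
    have h := wk_one_le' (x a) (A.toContinuousLinearMap v a)
    have hn : ‖A.toContinuousLinearMap v a‖ ≤ ‖A‖ * ∏ i ∈ ({a} : Finset (Fin n))ᶜ, ‖v i‖ := by
      refine ContinuousLinearMap.opNorm_le_bound _ (by positivity) fun z => ?_
      refine (A.le_opNorm _).trans (le_of_eq ?_)
      rw [Fintype.prod_eq_mul_prod_compl a]
      simp only [Function.update_self]
      rw [mul_comm ‖z‖, ← mul_assoc]
      congr 2
      refine Finset.prod_congr rfl fun i hi => ?_
      rw [Function.update_of_ne (by simpa using hi)]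
    simp only [Finset.piecewise_singleton, Finset.prod_singleton]
    refine h.trans ((mul_le_mul_of_nonneg_right hn (wk_nonneg _ _)).trans (le_of_eq (by ring)))
  | cons a S ha hS ih =>
    intro v
    have hac : a ∈ Sᶜ := by simpa using ha
    have hcomp : (Finset.cons a S ha)ᶜ = Sᶜ.erase a := by
      ext i; simp
    have hnn : 0 ≤ ∏ i ∈ S, weakNorm 𝕜 1 (x i) := Finset.prod_nonneg fun i _ => wk_nonneg _ _
    have h := avg_bound (x a)
      (fun j => A.toContinuousLinearMap (S.piecewise (fun i => x i j) v) a)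
      (‖A‖ * (∏ i ∈ S, weakNorm 𝕜 1 (x i)) * ∏ i ∈ Sᶜ.erase a, ‖v i‖) (by positivity)
      (fun e => by
        have h1 := ih (Function.update v a e)
        rw [← Finset.mul_prod_erase _ _ hac, Function.update_self] at h1
        have h2 : ∏ i ∈ Sᶜ.erase a, ‖Function.update v a e i‖ = ∏ i ∈ Sᶜ.erase a, ‖v i‖ :=
          Finset.prod_congr rfl fun i hi => by
            rw [Function.update_of_ne (Finset.ne_of_mem_erase hi)]
        rw [h2] at h1
        refine le_trans (le_of_eq ?_) (h1.trans (le_of_eq (by ring)))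
        refine Finset.sum_congr rfl fun j _ => ?_
        change ‖A (Function.update (S.piecewise (fun i => x i j) v) a e)‖ = _
        rw [Finset.update_piecewise_of_notMem _ _ _ ha])
    rw [hcomp, Finset.prod_cons]
    refine le_trans (le_of_eq ?_) (h.trans (le_of_eq (by ring)))
    refine Finset.sum_congr rfl fun j _ => ?_
    change _ = ‖A (Function.update (S.piecewise (fun i => x i j) v) a (x a j))‖
    rw [Finset.cons_eq_insert, Finset.piecewise_insert]

lemma core (A : ContinuousMultilinearMap 𝕜 E 𝕜) (l : Fin n) (hn : 2 ≤ n)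
    (hLO : LittlewoodOrlicz 𝕜 (E l →L[𝕜] 𝕜)) :
    ∃ C > 0, ∀ (m : ℕ) (x : ∀ i, Fin m → E i),
      ∑ j, ‖A (fun i => x i j)‖ ≤ C * ∏ i, weakNorm 𝕜 (if i = l then 2 else 1) (x i) := by
  obtain ⟨C, hC, H⟩ := hLO
  refine ⟨C * (‖A‖ + 1), by positivity, fun m x => ?_⟩
  have h := H m (fun j => A.toContinuousLinearMap (fun i => x i j) l)
    (fun j => ContinuousLinearMap.apply 𝕜 𝕜 (x l j))
  have hnn : 0 ≤ ∏ i ∈ Finset.univ.erase l, weakNorm 𝕜 1 (x i) :=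
    Finset.prod_nonneg fun i _ => wk_nonneg _ _
  have hSne : (Finset.univ.erase l).Nonempty := by
    rw [← Finset.card_pos, Finset.card_erase_of_mem (Finset.mem_univ _)]
    simp; omega
  have h1 : weakNorm 𝕜 1 (fun j => A.toContinuousLinearMap (fun i => x i j) l) ≤
      ‖A‖ * ∏ i ∈ Finset.univ.erase l, weakNorm 𝕜 1 (x i) := by
    refine wk_sup_le _ _ fun Φ hΦ => ?_
    simp only [Real.rpow_one, div_one]
    set f := fun j => A.toContinuousLinearMap (fun i => x i j) l with hf
    have hc : ∀ j, ∃ c : 𝕜, ‖c‖ ≤ 1 ∧ c * Φ (f j) = (‖Φ (f j)‖ : 𝕜) := fun j => by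
      obtain ⟨c, hc, h⟩ := RCLike.exists_norm_eq_mul_self (Φ (f j))
      exact ⟨c, hc.le, h.symm⟩
    choose c hc1 hc2 using hc
    have e1 : ∑ j, ‖Φ (f j)‖ = ‖Φ (∑ j, c j • f j)‖ := by
      have : Φ (∑ j, c j • f j) = ((∑ j, ‖Φ (f j)‖ : ℝ) : 𝕜) := by
        rw [map_sum]; push_cast
        exact Finset.sum_congr rfl fun j _ => by rw [map_smul, smul_eq_mul, hc2]
      rw [this, RCLike.norm_ofReal, abs_of_nonneg (Finset.sum_nonneg fun j _ => norm_nonneg _)]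
    rw [e1]
    refine (Φ.le_of_opNorm_le hΦ _).trans ?_
    rw [one_mul]
    refine ContinuousLinearMap.opNorm_le_bound _ (by positivity) fun z => ?_
    rw [sum_apply]
    refine (norm_sum_le _ _).trans ?_
    have dv := defant_voigt A x (Finset.univ.erase l) hSne (Function.update 0 l z)
    have hcl : (Finset.univ.erase l)ᶜ = {l} := by ext i; simp
    rw [hcl, Finset.prod_singleton, Function.update_self] at dv
    refine le_trans (Finset.sum_le_sum fun j _ => ?_) dv
    rw [smul_apply, norm_smul]
    refine (mul_le_of_le_one_left (norm_nonneg _) (hc1 j)).trans (le_of_eq ?_)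
    change ‖A (Function.update (fun i => x i j) l z)‖ = _
    congr 2
    funext i
    by_cases hi : i = l
    · subst hi; simp
    · simp [hi]
  have h2 : weakNorm 𝕜 2 (fun j => ContinuousLinearMap.apply 𝕜 𝕜 (x l j)) ≤
      weakNorm 𝕜 2 (x l) := by
    refine wk_sup_le _ _ fun Φ hΦ => ?_
    refine wk_le two_pos (x l) (Φ.comp (ContinuousLinearMap.apply 𝕜 𝕜)) ?_
    refine ContinuousLinearMap.opNorm_le_bound _ zero_le_one fun z => ?_
    rw [ContinuousLinearMap.comp_apply]
    refine (Φ.le_of_opNorm_le hΦ _).trans ?_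
    rw [one_mul, one_mul]
    refine ContinuousLinearMap.opNorm_le_bound _ (norm_nonneg _) fun g => ?_
    rw [ContinuousLinearMap.apply_apply, mul_comm]
    exact g.le_opNorm z
  have hprod : ∏ i, weakNorm 𝕜 (if i = l then 2 else 1) (x i) =
      weakNorm 𝕜 2 (x l) * ∏ i ∈ Finset.univ.erase l, weakNorm 𝕜 1 (x i) := by
    rw [← Finset.mul_prod_erase _ _ (Finset.mem_univ l)]
    congr 1
    · simp
    · exact Finset.prod_congr rfl fun i hi => by rw [if_neg (Finset.ne_of_mem_erase hi)]
  rw [hprod]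
  have e : ∀ j, A (fun i => x i j) =
      ContinuousLinearMap.apply 𝕜 𝕜 (x l j) (A.toContinuousLinearMap (fun i => x i j) l) :=
    fun j => by
      change _ = A (Function.update (fun i => x i j) l (x l j))
      rw [Function.update_eq_self]
  simp only [e]
  refine h.trans ?_
  have hx := wk_nonneg (𝕜 := 𝕜) 2 (x l)
  calc _ ≤ C * (‖A‖ * ∏ i ∈ Finset.univ.erase l, weakNorm 𝕜 1 (x i)) * weakNorm 𝕜 2 (x l) := by
        gcongr
        exact wk_nonneg _ _
    _ ≤ C * ((‖A‖ + 1) * ∏ i ∈ Finset.univ.erase l, weakNorm 𝕜 1 (x i)) *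
          weakNorm 𝕜 2 (x l) := by
        gcongr; linarith
    _ = _ := by ring

end multi

/-- If `n ≥ 2`, `1 ≤ p_i ≤ ∞` with `p_n ≥ 2`, `1 ≤ p ≤ ∞` and
`n − 3/2 ≤ ∑_i 1/p_i − 1/p` (stated additively), and the dual of `E_n` has the
Littlewood–Orlicz property, then every continuous `n`-linear form on `E₁ × ⋯ × E_n` is
absolutely `(p; p₁, …, p_n)`-summing. -/
theorem littlewood_orlicz_coincidence {𝕜 : Type*} [RCLike 𝕜] {n : ℕ} (hn : 2 ≤ n)
    (E : Fin n → Type*) [∀ i, NormedAddCommGroup (E i)] [∀ i, NormedSpace 𝕜 (E i)]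
    [∀ i, CompleteSpace (E i)]
    (ps : Fin n → ℝ≥0∞) (hps : ∀ i, 1 ≤ ps i)
    (hpn : 2 ≤ ps ⟨n - 1, by omega⟩)
    (p : ℝ≥0∞) (hp : 1 ≤ p)
    (hcond : ENNReal.ofReal ((n : ℝ) - 3 / 2) + 1 / p ≤ ∑ i, 1 / ps i)
    (hLO : LittlewoodOrlicz 𝕜 (E ⟨n - 1, by omega⟩ →L[𝕜] 𝕜))
    (A : ContinuousMultilinearMap 𝕜 E 𝕜) :
    IsAbsSummingE p ps A := by
  set l : Fin n := ⟨n - 1, by omega⟩ with hl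
  obtain ⟨C, hC, H⟩ := core A l hn hLO
  refine ⟨C, hC, fun m x => ?_⟩
  set r : Fin n → ℝ := fun i => if i = l then 2 else 1 with hr
  have hr0 : ∀ i, 0 < r i := fun i => by simp only [hr]; split_ifs <;> norm_num
  have hrp : ∀ i, ENNReal.ofReal (r i) ≤ ps i := fun i => by
    by_cases hi : i = l
    · simp only [hr, hi, if_true]
      simpa using hpn
    · simp only [hr, hi, if_false]
      simpa using hps i
  set t : Fin n → ℝ := fun i => 1 / r i - (1 / ps i).toReal with ht
  have ht0 : ∀ i, 0 ≤ t i := fun i => by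
    simp only [ht, sub_nonneg]
    rw [one_div, one_div, ← ENNReal.toReal_ofReal (inv_pos.2 (hr0 i)).le]
    refine ENNReal.toReal_mono ENNReal.ofReal_ne_top ?_
    rw [ENNReal.ofReal_inv_of_pos (hr0 i)]
    exact ENNReal.inv_le_inv.2 (hrp i)
  have hfin : ∀ i, 1 / ps i ≠ ∞ := fun i => by
    have := hps i
    simp only [one_div, ne_eq, ENNReal.inv_eq_top]
    rintro h; simp [h] at this
  have hsumr : ∑ i, 1 / r i = (n : ℝ) - 1 / 2 := by
    rw [← Finset.add_sum_erase _ _ (Finset.mem_univ l)]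
    have : ∑ i ∈ Finset.univ.erase l, 1 / r i = ∑ i ∈ Finset.univ.erase l, (1 : ℝ) :=
      Finset.sum_congr rfl fun i hi => by simp [hr, Finset.ne_of_mem_erase hi]
    rw [this, Finset.sum_const, Finset.card_erase_of_mem (Finset.mem_univ _)]
    simp only [hr, if_true, Finset.card_univ, Fintype.card_fin, nsmul_eq_mul, mul_one]
    rw [Nat.cast_sub (by omega)]; push_cast; ring
  have hpt : 1 / p ≠ ∞ := by
    simp only [one_div, ne_eq, ENNReal.inv_eq_top]
    rintro h; simp [h] at hp
  have hsumt : ∑ i, t i ≤ 1 - (1 / p).toReal := by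
    have h := ENNReal.toReal_mono (ENNReal.sum_ne_top.2 fun i _ => hfin i) hcond
    rw [ENNReal.toReal_add ENNReal.ofReal_ne_top hpt, ENNReal.toReal_sum fun i _ => hfin i,
      ENNReal.toReal_ofReal (by
        have : (2 : ℝ) ≤ n := by exact_mod_cast hn
        linarith)] at h
    simp only [ht, Finset.sum_sub_distrib, hsumr]
    linarith
  have key : ∀ w : Fin m → ℝ, (∀ j, 0 ≤ w j) → ∑ j, w j ≤ 1 →
      ∑ j, w j ^ (∑ i, t i) * ‖A (fun i => x i j)‖ ≤ C * ∏ i, weakNormE 𝕜 (ps i) (x i) := by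
    intro w hw hw1
    have h := H m (fun i j => ((w j ^ t i : ℝ) : 𝕜) • x i j)
    have h2 : ∏ i, weakNorm 𝕜 (r i) (fun j => ((w j ^ t i : ℝ) : 𝕜) • x i j) ≤
        ∏ i, weakNormE 𝕜 (ps i) (x i) :=
      Finset.prod_le_prod (fun i _ => wk_nonneg _ _)
        fun i _ => wk_compare (x i) w hw hw1 (r i) (hr0 i) (ps i) (hrp i)
    refine le_trans (le_of_eq ?_) (h.trans (mul_le_mul_of_nonneg_left h2 hC.le))
    refine Finset.sum_congr rfl fun j _ => ?_
    rw [A.map_smul_univ (fun i => ((w j ^ t i : ℝ) : 𝕜)) (fun i => x i j), norm_smul, norm_prod]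
    congr 1
    rw [Real.rpow_sum_of_nonneg (hw j) (fun i _ => ht0 i)]
    refine Finset.prod_congr rfl fun i _ => ?_
    rw [RCLike.norm_ofReal, abs_of_nonneg (Real.rpow_nonneg (hw j) _)]
  have hR : 0 ≤ C * ∏ i, weakNormE 𝕜 (ps i) (x i) := by
    refine le_trans (Finset.sum_nonneg fun j _ => ?_) (key (fun _ => 0) (by simp) (by simp))
    exact mul_nonneg (Real.rpow_nonneg le_rfl _) (norm_nonneg _)
  by_cases hpi : p = ∞
  · simp only [lpNormE, hpi, if_true]
    refine Real.iSup_le (fun j => ?_) hR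
    have h := key (Pi.single j 1) (fun i => by
      by_cases hi : i = j
      · subst hi; simp
      · simp [hi]) (by simp)
    refine le_trans ?_ h
    refine le_trans (le_of_eq ?_) (Finset.single_le_sum (f := fun k =>
      (Pi.single j (1:ℝ) : Fin m → ℝ) k ^ (∑ i, t i) * ‖A (fun i => x i k)‖) (fun k _ => ?_) (Finset.mem_univ j))
    · simp
    · refine mul_nonneg (Real.rpow_nonneg ?_ _) (norm_nonneg _)
      by_cases hi : k = j
      · subst hi; simp
      · simp [hi]
  · simp only [lpNormE, hpi, if_false]
    set q := p.toReal with hq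
    have hq1 : 1 ≤ q := by
      have := ENNReal.toReal_mono hpi hp
      simpa using this
    have hq0 : 0 < q := by linarith
    set y : Fin m → ℝ := fun j => ‖A (fun i => x i j)‖ with hy
    have hy0 : ∀ j, 0 ≤ y j := fun j => norm_nonneg _
    change (∑ j, y j ^ q) ^ (1 / q) ≤ _
    set S := ∑ j, y j ^ q with hS
    have hS0 : 0 ≤ S := Finset.sum_nonneg fun j _ => Real.rpow_nonneg (hy0 j) _
    rcases hS0.eq_or_lt with h0 | h0
    · rw [← h0, Real.zero_rpow (by positivity)]; exact hR
    have hw0 : ∀ j, 0 ≤ y j ^ q / S := fun j => div_nonneg (Real.rpow_nonneg (hy0 j) _) hS0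
    have hw1 : ∑ j, y j ^ q / S = 1 := by rw [← Finset.sum_div, ← hS, div_self h0.ne']
    refine le_trans ?_ (key (fun j => y j ^ q / S) hw0 hw1.le)
    have hpq : (1 / p).toReal = 1 / q := by rw [one_div, ENNReal.toReal_inv, one_div]
    rw [hpq] at hsumt
    have ht00 : 0 ≤ ∑ i, t i := Finset.sum_nonneg fun i _ => ht0 i
    have hterm : ∀ j, S ^ (1 / q) * (y j ^ q / S) ≤ (y j ^ q / S) ^ (∑ i, t i) * y j := fun j => by
      rcases (hy0 j).eq_or_lt with hj | hj
      · rw [← hj, Real.zero_rpow hq0.ne']; simp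
      have hwj : 0 < y j ^ q / S := by positivity
      have hwj1 : y j ^ q / S ≤ 1 := by
        rw [← hw1]
        exact Finset.single_le_sum (f := fun j => y j ^ q / S) (fun j _ => hw0 j)
          (Finset.mem_univ j)
      have h1 : (y j ^ q / S) ^ (1 - 1 / q) ≤ (y j ^ q / S) ^ (∑ i, t i) :=
        Real.rpow_le_rpow_of_exponent_ge hwj hwj1 hsumt
      refine le_trans (le_of_eq ?_) (mul_le_mul_of_nonneg_right h1 (hy0 j))
      rw [Real.rpow_sub hwj, Real.rpow_one, Real.div_rpow (by positivity) hS0 (1 / q),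
        ← Real.rpow_mul (hy0 j), mul_one_div_cancel hq0.ne', Real.rpow_one]
      have : 0 < S ^ (1 / q) := by positivity
      field_simp
    calc S ^ (1 / q) = ∑ j, S ^ (1 / q) * (y j ^ q / S) := by
          rw [← Finset.mul_sum, hw1, mul_one]
      _ ≤ _ := Finset.sum_le_sum fun j _ => hterm j
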